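/- Let p, q ≥ 2 be relatively prime integers and let (λ_k)_{k≥1} and (μ_k)_{k≥1} be strictly increasing sequences of positive integers with μ_k ≥ p^{λ_k} for all k. Then the number α = Σ_{k≥1} p^{−λ_k} q^{−μ_k} is normal to base q (Korobov). -/

import Mathlib

open Filter MeasureTheory Topology
open scoped Classical

/-- The `(n+1)`-st digit (i.e. `ε_{n+1}`, `0`-indexed by `n`) of the base-`q` expansion of `x`,
chosen as the greedy expansion (never eventually equal to `q - 1`). -/
noncomputable def qdigit (q : ℕ) (x : ℝ) (n : ℕ) : ℕ :=
  (⌊x * (q : ℝ) ^ (n + 1)⌋).toNat % q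

/-- `x` is normal to base `q`: every word `d` of length `m ≥ 1` over `{0, …, q-1}` occurs in the
base-`q` digit sequence of `x` with frequency `q^{-m}`. -/
def IsNormal (q : ℕ) (x : ℝ) : Prop :=
  ∀ m : ℕ, 0 < m → ∀ d : Fin m → ℕ, (∀ i, d i < q) →
    Tendsto
      (fun N : ℕ =>
        (((Finset.range N).filter fun n =>
          ∀ i : Fin m, qdigit q x (n + (i : ℕ)) = d i).card : ℝ) / N)
      atTop (𝓝 (((q : ℝ) ^ m)⁻¹))

/-!
For `μ_k ≤ n < μ_{k+1}` the fractional parts of `q ^ n * α` and `A * q ^ (n - μ_k) / p ^ λ_k`, with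
`A` coprime to `p`, differ by less than `p ^ (-λ_k)`. By lifting the exponent, the multiplicative
order of `q` modulo `p ^ l` is at least a constant times `p ^ l`, so that in a window of `g`
consecutive `n` each residue `A * q ^ (n - μ_k)` modulo `p ^ λ_k` is hit `O(1 + g / p ^ λ_k)` times.
Since `p ^ λ_k = O(μ_k)` also for an incomplete last block, every word of length `M` has upper
frequency at most `C * q ^ (-M)` with `C` independent of `M`. This already implies normality: in all
but a small proportion of the words of length `L` a given digit (or word) has nearly its expected
number of occurrences, by a second moment computation, and the bound controls the exceptional ones.
-/

open Finset Asymptotics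

/-- The word `ε_{n+1} … ε_{n+m}` of base-`q` digits of `x`, read as an integer below `q ^ m` whose
least significant digit is `ε_{n+m}`. -/
noncomputable def digitBlock (q : ℕ) (x : ℝ) (m n : ℕ) : ℕ :=
  ⌊x * (q : ℝ) ^ (n + m)⌋₊ % q ^ m

/-- The number of `n < N` at which the length-`m` word of base-`q` digits of `x` is the one coded
by `w`, in the sense of `digitBlock`. -/
noncomputable def blockCount (q : ℕ) (x : ℝ) (m w N : ℕ) : ℕ :=
  #{n ∈ range N | digitBlock q x m n = w}

/-- The hypothesis of the Piatetski-Shapiro normality criterion: every word of length `M` has upper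
frequency at most `C * q ^ (-M)`, with `C` independent of `M`. -/
def BlockFrequenciesBounded (q : ℕ) (x : ℝ) (C : ℕ) : Prop :=
  ∀ M : ℕ, ∀ᶠ N : ℕ in atTop, ∀ w < q ^ M, q ^ M * blockCount q x M w N ≤ C * N

section DigitBlocks

variable {q : ℕ} {x : ℝ}

lemma natFloor_mul_pow_add_div (hq : 0 < q) (x : ℝ) (n k : ℕ) :
    ⌊x * (q : ℝ) ^ (n + k)⌋₊ / q ^ k = ⌊x * (q : ℝ) ^ n⌋₊ := by
  rw [← Nat.floor_div_natCast, Nat.cast_pow, pow_add, ← mul_assoc,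
    mul_div_cancel_right₀ _ (by positivity)]

lemma digitBlock_lt (hq : 0 < q) (m n : ℕ) : digitBlock q x m n < q ^ m :=
  Nat.mod_lt _ (by positivity)

lemma digitBlock_one (n : ℕ) : digitBlock q x 1 n = qdigit q x n := by
  rw [digitBlock, qdigit, pow_one, Int.floor_toNat]

lemma digitBlock_div_pow_mod_pow (hq : 0 < q) (i k j n : ℕ) :
    digitBlock q x (i + k + j) n / q ^ j % q ^ k = digitBlock q x k (n + i) := by
  have hsplit : q ^ (i + k + j) = q ^ j * q ^ (i + k) := by rw [← pow_add, add_comm j]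
  rw [digitBlock, digitBlock, hsplit, Nat.mod_mul_right_div_self,
    Nat.mod_mod_of_dvd _ (pow_dvd_pow q (Nat.le_add_left k i)), ← add_assoc,
    natFloor_mul_pow_add_div hq, ← add_assoc]

lemma exists_forall_digitBlock_eq_iff (hq : 0 < q) {m : ℕ} (d : Fin m → ℕ) (hd : ∀ i, d i < q) :
    ∃ w < q ^ m, ∀ n, digitBlock q x m n = w ↔ ∀ i : Fin m, qdigit q x (n + i) = d i := by
  let code : Fin (q ^ m) := finFunctionFinEquiv fun i => ⟨d i.rev, hd i.rev⟩
  refine ⟨code, code.isLt, fun n => ?_⟩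
  have hdigit (i : Fin m) : digitBlock q x m n / q ^ (i.rev : ℕ) % q = qdigit q x (n + i) := by
    have hm : (i : ℕ) + 1 + i.rev = m := by rw [Fin.val_rev]; omega
    have h := digitBlock_div_pow_mod_pow (x := x) hq i 1 i.rev n
    rwa [hm, pow_one, digitBlock_one] at h
  calc
    digitBlock q x m n = code ↔ (⟨_, digitBlock_lt hq m n⟩ : Fin (q ^ m)) = code := by
      rw [Fin.ext_iff]
    _ ↔ ∀ i : Fin m, digitBlock q x m n / q ^ (i : ℕ) % q = d i.rev := by
      rw [← Equiv.symm_apply_eq, funext_iff]; exact forall_congr' fun i => Fin.ext_iff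
    _ ↔ ∀ i : Fin m, qdigit q x (n + i) = d i := by
      rw [← Fin.revPerm.forall_congr_right]
      simp only [Fin.revPerm_apply, Fin.rev_rev, hdigit]

lemma blockCount_eq_add_card {m w a b : ℕ} (hab : a ≤ b) :
    blockCount q x m w b =
      blockCount q x m w a + #{n ∈ Ico a b | digitBlock q x m n = w} := by
  simp only [blockCount, card_filter]
  exact (sum_range_add_sum_Ico _ hab).symm

end DigitBlocks

section SecondMoment

lemma sum_range_mul_eq_sum_sum {M : Type*} [AddCommMonoid M] (f : ℕ → M) (Q a : ℕ) :
    ∑ w ∈ range (Q * a), f w = ∑ c ∈ range a, ∑ b ∈ range Q, f (Q * c + b) := by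
  induction a with
  | zero => simp
  | succ a ih => rw [sum_range_succ, ← ih, Nat.mul_succ, sum_range_add]

-- The digits of a uniform `w < Q ^ L` are independent, so the cross terms vanish.
lemma mul_sum_sq_sum_digits {R : Type*} [CommRing R] {Q : ℕ} {g : ℕ → R}
    (hg : ∑ b ∈ range Q, g b = 0) (L : ℕ) :
    Q * ∑ w ∈ range (Q ^ L), (∑ j ∈ range L, g (w / Q ^ j % Q)) ^ 2 =
      L * Q ^ L * ∑ b ∈ range Q, g b ^ 2 := by
  induction L with
  | zero => simp
  | succ L ih =>
    set s : ℕ → R := fun c => ∑ j ∈ range L, g (c / Q ^ j % Q)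
    have hdigits (c b : ℕ) (hb : b ∈ range Q) :
        ∑ j ∈ range (L + 1), g ((Q * c + b) / Q ^ j % Q) = s c + g b := by
      have hbQ := mem_range.1 hb
      rw [sum_range_succ', pow_zero, Nat.div_one, Nat.mul_add_mod, Nat.mod_eq_of_lt hbQ]
      refine congrArg (· + g b) (sum_congr rfl fun j _ => ?_)
      rw [pow_succ', ← Nat.div_div_eq_div_mul, Nat.mul_add_div (by omega), Nat.div_eq_of_lt hbQ,
        add_zero]
    have hfiber (c : ℕ) :
        ∑ b ∈ range Q, (∑ j ∈ range (L + 1), g ((Q * c + b) / Q ^ j % Q)) ^ 2 =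
          Q * s c ^ 2 + ∑ b ∈ range Q, g b ^ 2 := by
      rw [sum_congr rfl fun b hb => by rw [hdigits c b hb, add_sq], sum_add_distrib,
        sum_add_distrib, ← mul_sum, hg]
      simp
    rw [pow_succ', sum_range_mul_eq_sum_sum, sum_congr rfl fun c _ => hfiber c, sum_add_distrib,
      ← mul_sum, ih, sum_const, card_range, nsmul_eq_mul]
    push_cast
    ring

end SecondMoment

section Averaging

variable {f : ℕ → ℝ} {B : ℝ}

lemma abs_sum_range_shift_sub_le (hf : ∀ n, |f n| ≤ B) (a N : ℕ) :
    |∑ n ∈ range N, f (n + a) - ∑ n ∈ range N, f n| ≤ 2 * a * B := by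
  have hends : ∑ n ∈ range N, f (n + a) - ∑ n ∈ range N, f n =
      ∑ n ∈ range a, f (N + n) - ∑ n ∈ range a, f n := by
    have := (sum_range_add f N a).symm.trans ((add_comm N a) ▸ sum_range_add f a N)
    simp only [add_comm _ a]
    linarith
  have hbound (u : ℕ → ℕ) : |∑ n ∈ range a, f (u n)| ≤ a * B :=
    (abs_sum_le_sum_abs _ _).trans <|
      (sum_le_card_nsmul _ _ B fun n _ => hf (u n)).trans_eq (by simp)
  calc |∑ n ∈ range N, f (n + a) - ∑ n ∈ range N, f n|
      = |∑ n ∈ range a, f (N + n) - ∑ n ∈ range a, f n| := by rw [hends]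
    _ ≤ |∑ n ∈ range a, f (N + n)| + |∑ n ∈ range a, f n| := norm_sub_le (_ : ℝ) _
    _ ≤ a * B + a * B := add_le_add (hbound (N + ·)) (hbound (·))
    _ = 2 * a * B := by ring

lemma abs_sum_sum_shift_sub_le (hf : ∀ n, |f n| ≤ B) {L A : ℕ} {a : ℕ → ℕ}
    (ha : ∀ j < L, a j ≤ A) (N : ℕ) :
    |∑ n ∈ range N, ∑ j ∈ range L, f (n + a j) - L * ∑ n ∈ range N, f n| ≤ L * (2 * A * B) := by
  have hB : 0 ≤ B := (abs_nonneg _).trans (hf 0)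
  calc |∑ n ∈ range N, ∑ j ∈ range L, f (n + a j) - L * ∑ n ∈ range N, f n|
      = |∑ j ∈ range L, (∑ n ∈ range N, f (n + a j) - ∑ n ∈ range N, f n)| := by
        rw [sum_comm, sum_sub_distrib, sum_const, card_range, nsmul_eq_mul]
    _ ≤ ∑ j ∈ range L, |∑ n ∈ range N, f (n + a j) - ∑ n ∈ range N, f n| :=
        abs_sum_le_sum_abs _ _
    _ ≤ ∑ _j ∈ range L, 2 * A * B := by
        refine sum_le_sum fun j hj => (abs_sum_range_shift_sub_le hf (a j) N).trans ?_
        have := ha j (mem_range.1 hj)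
        gcongr
    _ = L * (2 * A * B) := by simp

lemma tendsto_zero_of_eventually_abs_le_add {u a : ℕ → ℝ} {b : ℕ → ℕ → ℝ}
    (ha : Tendsto a atTop (𝓝 0)) (hb : ∀ L, Tendsto (b L) atTop (𝓝 0))
    (hu : ∀ L, 0 < L → ∀ᶠ N in atTop, |u N| ≤ a L + b L N) : Tendsto u atTop (𝓝 0) := by
  refine Metric.tendsto_nhds.2 fun ε hε => ?_
  obtain ⟨L, haL, hL⟩ :=
    ((ha.eventually_lt_const (half_pos hε)).and (eventually_gt_atTop 0)).exists
  filter_upwards [hu L hL, (hb L).eventually_lt_const (half_pos hε)] with N hN hbN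
  rw [Real.dist_0_eq_abs]
  linarith

end Averaging

section NormalityCriterion

variable {q : ℕ} {x : ℝ} {C : ℕ}

lemma pow_mul_sum_digitBlock_le (hq : 0 < q) {M N : ℕ}
    (hC : ∀ w < q ^ M, q ^ M * blockCount q x M w N ≤ C * N) {h : ℕ → ℝ} (hh : ∀ w, 0 ≤ h w) :
    (q : ℝ) ^ M * ∑ n ∈ range N, h (digitBlock q x M n) ≤ C * N * ∑ w ∈ range (q ^ M), h w := by
  have hmaps : ∀ n ∈ range N, digitBlock q x M n ∈ range (q ^ M) :=
    fun n _ => mem_range.2 (digitBlock_lt hq M n)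
  rw [← sum_fiberwise_of_maps_to' hmaps, mul_sum, mul_sum]
  refine sum_le_sum fun w hw => ?_
  rw [sum_const, nsmul_eq_mul, ← mul_assoc]
  exact mul_le_mul_of_nonneg_right (mod_cast hC w (mem_range.1 hw)) (hh w)

lemma digitBlock_mul_div_mod (hq : 0 < q) {m L j : ℕ} (hj : j < L) (n : ℕ) :
    digitBlock q x (m * L) n / (q ^ m) ^ j % q ^ m = digitBlock q x m (n + m * (L - 1 - j)) := by
  have hL : m * (L - 1 - j) + m + m * j = m * L := by
    rw [← Nat.mul_succ, ← mul_add]; congr 1; omega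
  rw [← pow_mul, ← digitBlock_div_pow_mod_pow hq _ _ (m * j), hL]

variable {m : ℕ} {g : ℕ → ℝ}

lemma sum_sq_sum_digitBlock_le (hq : 0 < q) {L N : ℕ}
    (hC : ∀ w < q ^ (m * L), q ^ (m * L) * blockCount q x (m * L) w N ≤ C * N)
    (hsum : ∑ b ∈ range (q ^ m), g b = 0) (hg : ∀ b, |g b| ≤ 1) :
    ∑ n ∈ range N, (∑ j ∈ range L, g (digitBlock q x m (n + m * (L - 1 - j)))) ^ 2 ≤
      C * N * L := by
  set Q := q ^ m
  have hQ0 : (0 : ℝ) < Q := mod_cast pow_pos hq m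
  have hQL : q ^ (m * L) = Q ^ L := pow_mul q m L
  set S : ℕ → ℝ := fun w => ∑ j ∈ range L, g (w / Q ^ j % Q)
  have hS (n : ℕ) : ∑ j ∈ range L, g (digitBlock q x m (n + m * (L - 1 - j))) =
      S (digitBlock q x (m * L) n) :=
    sum_congr rfl fun j hj => by rw [digitBlock_mul_div_mod hq (mem_range.1 hj)]
  have hsq : ∑ b ∈ range Q, g b ^ 2 ≤ Q :=
    (sum_le_card_nsmul _ _ 1 fun b _ => (sq_le_one_iff_abs_le_one _).2 (hg b)).trans_eq (by simp)
  have horbit := pow_mul_sum_digitBlock_le hq hC fun w => sq_nonneg (S w)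
  rw [← Nat.cast_pow, hQL, Nat.cast_pow] at horbit
  simp only [hS]
  refine le_of_mul_le_mul_left ?_ (mul_pos hQ0 (pow_pos hQ0 L))
  calc (Q : ℝ) * Q ^ L * ∑ n ∈ range N, S (digitBlock q x (m * L) n) ^ 2
      ≤ Q * (C * N * ∑ w ∈ range (Q ^ L), S w ^ 2) := by rw [mul_assoc]; gcongr
    _ = C * N * (Q * ∑ w ∈ range (Q ^ L), S w ^ 2) := by ring
    _ = C * N * (L * Q ^ L * ∑ b ∈ range Q, g b ^ 2) := by rw [mul_sum_sq_sum_digits hsum]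
    _ ≤ C * N * (L * Q ^ L * Q) := by gcongr
    _ = Q * Q ^ L * (C * N * L) := by ring

lemma abs_sum_digitBlock_div_le (hq : 0 < q) {L N : ℕ} (hL : 0 < L) (hN : 0 < N)
    (hC : ∀ w < q ^ (m * L), q ^ (m * L) * blockCount q x (m * L) w N ≤ C * N)
    (hsum : ∑ b ∈ range (q ^ m), g b = 0) (hg : ∀ b, |g b| ≤ 1) :
    |(∑ n ∈ range N, g (digitBlock q x m n)) / N| ≤ √(C / L) + 2 * (m * L) / N := by
  set F := ∑ n ∈ range N, g (digitBlock q x m n)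
  set T : ℕ → ℝ := fun n => ∑ j ∈ range L, g (digitBlock q x m (n + m * (L - 1 - j)))
  have hL0 : (0 : ℝ) < L := mod_cast hL
  have hN0 : (0 : ℝ) < N := mod_cast hN
  have haverage : |∑ n ∈ range N, T n - L * F| ≤ L * (2 * (m * L : ℕ) * 1) :=
    abs_sum_sum_shift_sub_le (fun n => hg (digitBlock q x m n))
      (fun j _ => Nat.mul_le_mul_left m (by omega)) N
  have hcauchy : |∑ n ∈ range N, T n| ≤ L * N * √(C / L) := by
    refine abs_le_of_sq_le_sq ?_ (by positivity)
    calc (∑ n ∈ range N, T n) ^ 2 ≤ N * ∑ n ∈ range N, T n ^ 2 := by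
          simpa only [card_range] using sq_sum_le_card_mul_sum_sq (s := range N) (f := T)
      _ ≤ N * (C * N * L) := by gcongr; exact sum_sq_sum_digitBlock_le hq hC hsum hg
      _ = (L * N * √(C / L)) ^ 2 := by
          rw [mul_pow, Real.sq_sqrt (by positivity)]; field_simp
  rw [abs_div, Nat.abs_cast, div_le_iff₀ hN0]
  refine le_of_mul_le_mul_left ?_ hL0
  calc L * |F| = |∑ n ∈ range N, T n - (∑ n ∈ range N, T n - L * F)| := by
        rw [sub_sub_cancel, abs_mul, Nat.abs_cast]
    _ ≤ |∑ n ∈ range N, T n| + |∑ n ∈ range N, T n - L * F| := norm_sub_le (_ : ℝ) _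
    _ ≤ L * N * √(C / L) + L * (2 * (m * L : ℕ) * 1) := add_le_add hcauchy haverage
    _ = L * ((√(C / L) + 2 * (m * L) / N) * N) := by push_cast; field_simp

lemma tendsto_sum_digitBlock_div (hq : 0 < q) (hC : BlockFrequenciesBounded q x C)
    (hsum : ∑ b ∈ range (q ^ m), g b = 0) (hg : ∀ b, |g b| ≤ 1) :
    Tendsto (fun N : ℕ => (∑ n ∈ range N, g (digitBlock q x m n)) / N) atTop (𝓝 0) := by
  refine tendsto_zero_of_eventually_abs_le_add (a := fun L => √(C / L))
    (b := fun L N => 2 * (m * L) / N) ?_ (fun L => tendsto_const_div_atTop_nhds_zero_nat _)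
    fun L hL => ?_
  · simpa using (tendsto_const_div_atTop_nhds_zero_nat (C : ℝ)).sqrt
  · filter_upwards [hC (m * L), eventually_gt_atTop 0] with N hCN hN
    exact abs_sum_digitBlock_div_le hq hL hN hCN hsum hg

lemma tendsto_blockCount_div (hq : 0 < q) (hC : BlockFrequenciesBounded q x C) {w : ℕ}
    (hw : w < q ^ m) :
    Tendsto (fun N : ℕ => (blockCount q x m w N : ℝ) / N) atTop (𝓝 ((q : ℝ) ^ m)⁻¹) := by
  set g : ℕ → ℝ := fun b => (if b = w then 1 else 0) - ((q : ℝ) ^ m)⁻¹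
  have hQ : (1 : ℝ) ≤ (q : ℝ) ^ m := one_le_pow₀ (mod_cast hq)
  have hsum : ∑ b ∈ range (q ^ m), g b = 0 := by
    simp [g, sum_sub_distrib, hw, (one_pos.trans_le hQ).ne']
  have hg (b : ℕ) : |g b| ≤ 1 := by
    have hinv_le : ((q : ℝ) ^ m)⁻¹ ≤ 1 := inv_le_one_of_one_le₀ hQ
    have hinv_nonneg : 0 ≤ ((q : ℝ) ^ m)⁻¹ := by positivity
    simp only [g, abs_le]
    split_ifs <;> constructor <;> linarith
  rw [← tendsto_sub_nhds_zero_iff]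
  refine (tendsto_sum_digitBlock_div hq hC hsum hg).congr' ?_
  filter_upwards [eventually_gt_atTop 0] with N hN
  have hN0 : (N : ℝ) ≠ 0 := mod_cast hN.ne'
  rw [sum_sub_distrib, sum_boole, sum_const, card_range, nsmul_eq_mul, sub_div,
    mul_div_cancel_left₀ _ hN0, blockCount]

/-- The Piatetski-Shapiro criterion. -/
theorem BlockFrequenciesBounded.isNormal (hC : BlockFrequenciesBounded q x C) (hq : 0 < q) :
    IsNormal q x := by
  intro m _ d hd
  obtain ⟨w, hw, hword⟩ := exists_forall_digitBlock_eq_iff (x := x) hq d hd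
  refine (tendsto_blockCount_div hq hC hw).congr fun N => ?_
  simp only [blockCount, hword]

end NormalityCriterion

section ResidueCounting

lemma natFloor_mul_mod {t : ℝ} (ht : 0 ≤ t) {Q : ℕ} (hQ : 0 < Q) :
    ⌊Q * t⌋₊ % Q = ⌊Q * Int.fract t⌋₊ := by
  have hsplit : Q * t = Q * Int.fract t + (Q * ⌊t⌋₊ : ℕ) := by
    rw [Nat.cast_mul, natCast_floor_eq_intCast_floor ht, ← mul_add, Int.fract_add_floor]
  have hlt : ⌊Q * Int.fract t⌋₊ < Q := by
    rw [Nat.floor_lt (mul_nonneg Q.cast_nonneg (Int.fract_nonneg t))]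
    exact mul_lt_of_lt_one_right (mod_cast hQ) (Int.fract_lt_one t)
  rw [hsplit, Nat.floor_add_natCast (mul_nonneg Q.cast_nonneg (Int.fract_nonneg t)),
    Nat.add_mul_mod_self_left, Nat.mod_eq_of_lt hlt]

lemma natFloor_mul_mod_mem_Icc {t : ℝ} (ht : 0 ≤ t) {P Q : ℕ} (hP : 0 < P) (hQ : 0 < Q) :
    ⌊P * t⌋₊ % P ∈
      Icc (P * (⌊Q * t⌋₊ % Q) / Q) (P * (⌊Q * t⌋₊ % Q + 1) / Q) := by
  rw [natFloor_mul_mod ht hP, natFloor_mul_mod ht hQ, mem_Icc]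
  set u := Int.fract t
  have hu : 0 ≤ u := Int.fract_nonneg t
  have hP0 : (0 : ℝ) < P := mod_cast hP
  have hQ0 : (0 : ℝ) < Q := mod_cast hQ
  have hPfloor := Nat.floor_le (mul_nonneg hP0.le hu)
  have hPfloor_lt := Nat.lt_floor_add_one (P * u)
  have hQfloor := Nat.floor_le (mul_nonneg hQ0.le hu)
  have hQfloor_lt := Nat.lt_floor_add_one (Q * u)
  constructor
  · rw [← Nat.lt_add_one_iff, Nat.div_lt_iff_lt_mul hQ]
    have : (P : ℝ) * ⌊Q * u⌋₊ < (⌊P * u⌋₊ + 1) * Q := by nlinarith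
    exact_mod_cast this
  · rw [Nat.le_div_iff_mul_le hQ]
    have : (⌊P * u⌋₊ : ℝ) * Q ≤ P * (⌊Q * u⌋₊ + 1) := by nlinarith
    exact_mod_cast this

lemma mul_card_Icc_div_le (P Q w : ℕ) :
    Q * #(Icc (P * w / Q) (P * (w + 1) / Q)) ≤ P + 2 * Q := by
  have hdiv : P * (w + 1) / Q ≤ P * w / Q + P / Q + 1 := Nat.add_div_le_div_add_div_add_one ..
  have hcard : #(Icc (P * w / Q) (P * (w + 1) / Q)) ≤ P / Q + 2 := by
    rw [Nat.card_Icc, tsub_le_iff_left]; linarith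
  calc Q * #(Icc (P * w / Q) (P * (w + 1) / Q)) ≤ Q * (P / Q + 2) := by gcongr
    _ = Q * (P / Q) + 2 * Q := by ring
    _ ≤ P + 2 * Q := by gcongr; exact Nat.mul_div_le P Q

lemma mul_card_le_of_forall_lt_le_mul_sub {P K s e : ℕ} {S : Finset ℕ} (hS : S ⊆ Icc s e)
    (hgap : ∀ a ∈ S, ∀ b ∈ S, a < b → P ≤ K * (b - a)) : P * #S ≤ K * (e - s) + P := by
  induction S using induction_on_max generalizing e with
  | empty => simp
  | insert b S hb ih =>
    obtain ⟨hbe, hSe⟩ := insert_subset_iff.1 hS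
    rw [mem_Icc] at hbe
    rw [card_insert_of_notMem fun hmem => (hb b hmem).false, mul_add_one]
    rcases S.eq_empty_or_nonempty with rfl | hne
    · simp
    set a := S.max' hne
    have ha : a ∈ S := S.max'_mem hne
    have has : s ≤ a := (mem_Icc.1 (hSe ha)).1
    have hab : a < b := hb a ha
    have hbelow : P * #S ≤ K * (a - s) + P :=
      ih (fun c hc => mem_Icc.2 ⟨(mem_Icc.1 (hSe hc)).1, S.le_max' c hc⟩)
        fun c hc d hd => hgap c (mem_insert_of_mem hc) d (mem_insert_of_mem hd)
    have hlast : P ≤ K * (b - a) := hgap a (mem_insert_of_mem ha) b (mem_insert_self b S) hab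
    calc P * #S + P ≤ K * (a - s) + P + K * (b - a) := by gcongr
      _ = K * (b - s) + P := by rw [add_right_comm, ← mul_add]; congr 2; omega
      _ ≤ K * (e - s) + P := by gcongr; exact hbe.2

lemma mul_card_filter_natFloor_mul_mod_le {t : ℕ → ℝ} (ht : ∀ n, 0 ≤ t n) {P Q K s e : ℕ}
    (hQ : 0 < Q) (hQP : Q ≤ P)
    (hrep : ∀ a ∈ Ico s e, ∀ b ∈ Ico s e, a < b → ⌊P * t a⌋₊ ≡ ⌊P * t b⌋₊ [MOD P] →
      P ≤ K * (b - a)) (w : ℕ) :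
    Q * #{n ∈ Ico s e | ⌊Q * t n⌋₊ % Q = w} ≤ 3 * (K * (e - s) + P) := by
  have hP : 0 < P := hQ.trans_le hQP
  set S := {n ∈ Ico s e | ⌊Q * t n⌋₊ % Q = w}
  set R := Icc (P * w / Q) (P * (w + 1) / Q)
  have hmaps : ∀ n ∈ S, ⌊P * t n⌋₊ % P ∈ R := fun n hn => by
    simpa only [(mem_filter.1 hn).2] using natFloor_mul_mod_mem_Icc (ht n) hP hQ
  have hfiber (r : ℕ) : P * #{n ∈ S | ⌊P * t n⌋₊ % P = r} ≤ K * (e - s) + P := by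
    have hsub : {n ∈ S | ⌊P * t n⌋₊ % P = r} ⊆ Ico s e :=
      (filter_subset _ _).trans (filter_subset _ _)
    exact mul_card_le_of_forall_lt_le_mul_sub (hsub.trans Ico_subset_Icc_self)
      fun a ha b hb hab => hrep a (hsub ha) b (hsub hb) hab
        ((mem_filter.1 ha).2.trans (mem_filter.1 hb).2.symm)
  refine le_of_mul_le_mul_left ?_ hP
  calc P * (Q * #S) = Q * ∑ r ∈ R, P * #{n ∈ S | ⌊P * t n⌋₊ % P = r} := by
        rw [card_eq_sum_card_fiberwise hmaps, mul_left_comm, mul_sum]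
    _ ≤ Q * ∑ _r ∈ R, (K * (e - s) + P) := by gcongr; exact hfiber _
    _ = Q * #R * (K * (e - s) + P) := by rw [sum_const, smul_eq_mul, mul_assoc]
    _ ≤ (P + 2 * Q) * (K * (e - s) + P) := by gcongr; exact mul_card_Icc_div_le P Q w
    _ ≤ 3 * P * (K * (e - s) + P) := by gcongr; omega
    _ = P * (3 * (K * (e - s) + P)) := by ring

end ResidueCounting

section Order

lemma emultiplicity_pow_sub_one {r : ℕ} (hr : r.Prime) {u : ℤ} (hu : (r : ℤ) ^ 2 ∣ u - 1) (d : ℕ) :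
    emultiplicity (r : ℤ) (u ^ d - 1) = emultiplicity (r : ℤ) (u - 1) + emultiplicity r d := by
  have hru : (r : ℤ) ∣ u - 1 := (dvd_pow_self _ two_ne_zero).trans hu
  have hrp : Prime (r : ℤ) := Nat.prime_iff_prime_int.1 hr
  have hndvd : ¬ (r : ℤ) ∣ u := fun h => hrp.not_dvd_one ((dvd_sub_right h).1 hru)
  rcases hr.eq_two_or_odd' with rfl | hodd
  · have h4 : (4 : ℤ) ∣ u - 1 := by simpa using hu
    simpa only [Nat.cast_ofNat, one_pow, ← Int.natCast_emultiplicity 2 d]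
      using Int.two_pow_sub_pow' d h4 hndvd
  · simpa only [one_pow] using Int.emultiplicity_pow_sub_pow hr hodd hru hndvd d

lemma natCast_pow_dvd_sub_one_mul {p : ℕ} {u : ℤ} (hu : (p : ℤ) ^ 2 ∣ u - 1) {l d : ℕ}
    (hd : (p : ℤ) ^ l ∣ u ^ d - 1) : (p : ℤ) ^ l ∣ (u - 1) * d := by
  rw [← Nat.cast_pow, Int.natCast_dvd, Nat.dvd_iff_prime_pow_dvd_dvd]
  intro r k hr hrk
  rw [← Int.natCast_dvd, Nat.cast_pow]
  rcases eq_or_ne k 0 with rfl | hk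
  · simp
  have hrp : (r : ℤ) ∣ p :=
    Int.natCast_dvd_natCast.2 (hr.dvd_of_dvd_pow ((dvd_pow_self r hk).trans hrk))
  have hrd : (r : ℤ) ^ k ∣ u ^ d - 1 := Dvd.dvd.trans (mod_cast hrk) hd
  rw [pow_dvd_iff_le_emultiplicity] at hrd ⊢
  rwa [emultiplicity_mul (Nat.prime_iff_prime_int.1 hr), Int.natCast_emultiplicity,
    ← emultiplicity_pow_sub_one hr ((pow_dvd_pow_of_dvd hrp 2).trans hu)]

lemma exists_forall_pow_dvd_mul_of_pow_modEq_one {p q : ℕ} (hq : 1 < q) (hpq : p.Coprime q) :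
    ∃ K > 0, ∀ l d, q ^ d ≡ 1 [MOD p ^ l] → p ^ l ∣ K * d := by
  have hp : p ≠ 0 := by rintro rfl; exact hq.ne' (by simpa using hpq)
  set T := (p ^ 2).totient
  have hT : T ≠ 0 := (Nat.totient_pos.2 (by positivity)).ne'
  have hone : 1 < q ^ T := Nat.one_lt_pow hT hq
  have hcast : ((q ^ T - 1 : ℕ) : ℤ) = (q : ℤ) ^ T - 1 := by push_cast [hone.le]; rfl
  have hsq : (p : ℤ) ^ 2 ∣ (q : ℤ) ^ T - 1 := by
    exact_mod_cast (Nat.modEq_iff_dvd.1 (Nat.ModEq.pow_totient (hpq.symm.pow_right 2)).symm)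
  refine ⟨q ^ T - 1, Nat.sub_pos_of_lt hone, fun l d hd => ?_⟩
  have hpow : (p : ℤ) ^ l ∣ ((q : ℤ) ^ T) ^ d - 1 := by
    have h := hd.symm.pow T
    rw [one_pow, pow_right_comm] at h
    exact_mod_cast Nat.modEq_iff_dvd.1 h
  have := natCast_pow_dvd_sub_one_mul hsq hpow
  rw [← hcast] at this
  exact_mod_cast this

lemma exists_forall_pow_le_mul_sub {p q : ℕ} (hq : 1 < q) (hpq : p.Coprime q) :
    ∃ K, ∀ A l a b, A.Coprime p → a < b → A * q ^ a ≡ A * q ^ b [MOD p ^ l] →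
      p ^ l ≤ K * (b - a) := by
  obtain ⟨K, hK, hdvd⟩ := exists_forall_pow_dvd_mul_of_pow_modEq_one hq hpq
  refine ⟨K, fun A l a b hA hab h => ?_⟩
  refine Nat.le_of_dvd (Nat.mul_pos hK (Nat.sub_pos_of_lt hab)) (hdvd l (b - a) ?_)
  have hcop : (p ^ l).gcd (A * q ^ a) = 1 :=
    (hA.symm.mul_right (hpq.pow_right a)).pow_left l
  refine (Nat.ModEq.cancel_left_of_coprime hcop ?_).symm
  rwa [mul_one, mul_assoc, ← pow_add, Nat.add_sub_cancel' hab.le]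

end Order

section KorobovSeries

/-- The term `p ^ (-λ_k) * q ^ (-μ_k)` of the series defining Korobov's number. -/
noncomputable def korobovTerm (p q : ℕ) (lam mu : ℕ → ℕ) (k : ℕ) : ℝ :=
  ((p : ℝ) ^ lam k)⁻¹ * ((q : ℝ) ^ mu k)⁻¹

lemma two_mul_pow_le_pow {p a b : ℕ} (hp : 2 ≤ p) (hab : a < b) : 2 * p ^ a ≤ p ^ b :=
  calc 2 * p ^ a ≤ p ^ (a + 1) := by rw [pow_succ']; gcongr
    _ ≤ p ^ b := Nat.pow_le_pow_right (by omega) hab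

lemma summable_of_nonneg_of_succ_le_mul {a : ℕ → ℝ} {r : ℝ} (hr : r < 1) (ha : ∀ n, 0 ≤ a n)
    (har : ∀ n, a (n + 1) ≤ r * a n) : Summable a :=
  summable_of_ratio_norm_eventually_le hr <| .of_forall fun n => by
    simpa only [Real.norm_of_nonneg (ha _)] using har n

lemma tsum_le_div_of_succ_le_mul {a : ℕ → ℝ} {r : ℝ} (hr0 : 0 ≤ r) (hr1 : r < 1)
    (ha : ∀ n, 0 ≤ a n) (har : ∀ n, a (n + 1) ≤ r * a n) : ∑' n, a n ≤ a 0 / (1 - r) :=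
  calc ∑' n, a n ≤ ∑' n, r ^ n * a 0 :=
        (summable_of_nonneg_of_succ_le_mul hr1 ha har).tsum_le_tsum
          (fun n => le_geom hr0 n fun k _ => har k)
          ((summable_geometric_of_lt_one hr0 hr1).mul_right _)
    _ = a 0 / (1 - r) := by
        rw [tsum_mul_right, tsum_geometric_of_lt_one hr0 hr1, inv_mul_eq_div]

variable {p q : ℕ} {lam mu : ℕ → ℕ}

lemma korobovTerm_nonneg (k : ℕ) : 0 ≤ korobovTerm p q lam mu k := by
  unfold korobovTerm; positivity

lemma korobovTerm_succ_le (hp : 2 ≤ p) (hlam : StrictMono lam) (k : ℕ) :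
    korobovTerm p q lam mu (k + 1) ≤ 1 / 2 * (((p : ℝ) ^ lam k)⁻¹ * ((q : ℝ) ^ mu (k + 1))⁻¹) := by
  have : (0 : ℝ) < p := mod_cast (by omega : 0 < p)
  have hpow : 2 * (p : ℝ) ^ lam k ≤ (p : ℝ) ^ lam (k + 1) :=
    mod_cast two_mul_pow_le_pow hp (hlam k.lt_succ_self)
  calc korobovTerm p q lam mu (k + 1) ≤ (2 * (p : ℝ) ^ lam k)⁻¹ * ((q : ℝ) ^ mu (k + 1))⁻¹ := by
        unfold korobovTerm; gcongr
    _ = 1 / 2 * (((p : ℝ) ^ lam k)⁻¹ * ((q : ℝ) ^ mu (k + 1))⁻¹) := by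
        rw [mul_inv, one_div, mul_assoc]

lemma korobovTerm_succ_le_half (hp : 2 ≤ p) (hq : 0 < q) (hlam : StrictMono lam) (hmu : Monotone mu)
    (k : ℕ) : korobovTerm p q lam mu (k + 1) ≤ 1 / 2 * korobovTerm p q lam mu k := by
  have hq1 : (1 : ℝ) ≤ q := mod_cast hq
  refine (korobovTerm_succ_le hp hlam k).trans ?_
  unfold korobovTerm
  gcongr
  exact hmu k.le_succ

lemma summable_korobovTerm (hp : 2 ≤ p) (hq : 0 < q) (hlam : StrictMono lam) (hmu : Monotone mu) :
    Summable (korobovTerm p q lam mu) :=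
  summable_of_nonneg_of_succ_le_mul one_half_lt_one korobovTerm_nonneg
    (korobovTerm_succ_le_half hp hq hlam hmu)

lemma tsum_korobovTerm_nat_add_le (hp : 2 ≤ p) (hq : 0 < q) (hlam : StrictMono lam)
    (hmu : Monotone mu) (k : ℕ) :
    ∑' i, korobovTerm p q lam mu (i + (k + 1)) ≤ ((p : ℝ) ^ lam k)⁻¹ * ((q : ℝ) ^ mu (k + 1))⁻¹ :=
  calc ∑' i, korobovTerm p q lam mu (i + (k + 1))
      ≤ korobovTerm p q lam mu (0 + (k + 1)) / (1 - 1 / 2) :=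
        tsum_le_div_of_succ_le_mul one_half_pos.le one_half_lt_one (fun _ => korobovTerm_nonneg _)
          fun i => by
            rw [add_right_comm]; exact korobovTerm_succ_le_half hp hq hlam hmu (i + (k + 1))
    _ ≤ ((p : ℝ) ^ lam k)⁻¹ * ((q : ℝ) ^ mu (k + 1))⁻¹ := by
        rw [zero_add, div_le_iff₀ (by norm_num)]
        linarith [korobovTerm_succ_le (q := q) (mu := mu) hp hlam k]

lemma korobovTerm_eq_mul_succ (hp : 0 < p) (hq : 0 < q) (hlam : Monotone lam) (hmu : Monotone mu)
    (k : ℕ) : korobovTerm p q lam mu k =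
      (p ^ (lam (k + 1) - lam k) * q ^ (mu (k + 1) - mu k) : ℕ) *
        korobovTerm p q lam mu (k + 1) := by
  have hp0 : (p : ℝ) ≠ 0 := mod_cast hp.ne'
  have hq0 : (q : ℝ) ≠ 0 := mod_cast hq.ne'
  rw [korobovTerm, korobovTerm, Nat.cast_mul, Nat.cast_pow, Nat.cast_pow,
    pow_sub₀ _ hp0 (hlam k.le_succ), pow_sub₀ _ hq0 (hmu k.le_succ)]
  field_simp

lemma exists_coprime_sum_korobovTerm_eq (hp : 0 < p) (hq : 0 < q) (hlam : StrictMono lam)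
    (hmu : Monotone mu) (k : ℕ) : ∃ A : ℕ, A.Coprime p ∧
      ∑ i ∈ range (k + 1), korobovTerm p q lam mu i = A * korobovTerm p q lam mu k := by
  induction k with
  | zero => exact ⟨1, p.coprime_one_left, by simp⟩
  | succ k ih =>
    obtain ⟨A, -, hA⟩ := ih
    set B := p ^ (lam (k + 1) - lam k) * q ^ (mu (k + 1) - mu k) with hB
    have hpB : p ∣ B :=
      (dvd_pow_self p (Nat.sub_pos_of_lt (hlam k.lt_succ_self)).ne').mul_right _
    refine ⟨A * B + 1, ?_, ?_⟩
    · obtain ⟨c, hc⟩ := hpB.mul_left A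
      simp [hc]
    · rw [sum_range_succ, hA, korobovTerm_eq_mul_succ hp hq hlam.monotone hmu, ← hB]
      push_cast
      ring

lemma exists_coprime_forall_natFloor_eq (hp : 2 ≤ p) (hq : 2 ≤ q) (hlam : StrictMono lam)
    (hmu : Monotone mu) (k : ℕ) : ∃ A : ℕ, A.Coprime p ∧ ∀ n ∈ Ico (mu k) (mu (k + 1)),
      ⌊(p ^ lam k : ℕ) * ((∑' i, korobovTerm p q lam mu i) * (q : ℝ) ^ n)⌋₊ =
        A * q ^ (n - mu k) := by
  have hp0 : 0 < p := by omega
  have hq0 : 0 < q := by omega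
  have hq1 : (1 : ℝ) < q := mod_cast hq
  obtain ⟨A, hA, hsum⟩ := exists_coprime_sum_korobovTerm_eq hp0 hq0 hlam hmu k
  refine ⟨A, hA, fun n hn => ?_⟩
  obtain ⟨hkn, hnk⟩ := mem_Ico.1 hn
  set tail := ∑' i, korobovTerm p q lam mu (i + (k + 1))
  have hsplit : (p ^ lam k : ℕ) * ((∑' i, korobovTerm p q lam mu i) * (q : ℝ) ^ n) =
      (p : ℝ) ^ lam k * tail * (q : ℝ) ^ n + (A * q ^ (n - mu k) : ℕ) := by
    rw [← (summable_korobovTerm hp hq0 hlam hmu).sum_add_tsum_nat_add (k + 1), hsum, korobovTerm]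
    push_cast
    rw [pow_sub₀ _ (by positivity) hkn]
    field_simp
    ring
  have htail : 0 ≤ tail := tsum_nonneg fun _ => korobovTerm_nonneg _
  have hlt : (p : ℝ) ^ lam k * tail * (q : ℝ) ^ n < 1 :=
    calc (p : ℝ) ^ lam k * tail * (q : ℝ) ^ n
        ≤ (p : ℝ) ^ lam k * (((p : ℝ) ^ lam k)⁻¹ * ((q : ℝ) ^ mu (k + 1))⁻¹) * (q : ℝ) ^ n := by
          gcongr; exact tsum_korobovTerm_nat_add_le hp hq0 hlam hmu k
      _ = (q : ℝ) ^ n / (q : ℝ) ^ mu (k + 1) := by field_simp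
      _ < 1 := by rw [div_lt_one (by positivity)]; exact pow_lt_pow_right₀ hq1 hnk
  rw [hsplit, Nat.floor_add_natCast (by positivity), Nat.floor_eq_zero.2 hlt, zero_add]

end KorobovSeries

section Blocks

lemma le_add_mul_of_forall_block_le {f P mu : ℕ → ℕ} {a b c k₀ : ℕ}
    (hmu : Monotone mu) (hP : ∀ k, 2 * P k ≤ P (k + 1)) (hPmu : ∀ k ≥ k₀, P k ≤ c * mu k)
    (hf : ∀ k ≥ k₀, ∀ N ∈ Set.Icc (mu k) (mu (k + 1)),
      f N + a * mu k ≤ f (mu k) + a * N + b * P k)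
    {k N : ℕ} (hk : k₀ ≤ k) (hN : N ∈ Set.Icc (mu k₀) (mu k)) :
    f N ≤ f (mu k₀) + a * N + 2 * b * c * N := by
  have hend : ∀ k ≥ k₀, f (mu k) ≤ f (mu k₀) + a * mu k + b * P k := fun k hk => by
    induction k, hk using Nat.le_induction with
    | base => omega
    | succ k hk ih =>
      have hblock := hf k hk _ (Set.right_mem_Icc.2 (hmu k.le_succ))
      have hdouble := Nat.mul_le_mul_left b (hP k)
      linarith
  induction k, hk using Nat.le_induction with
  | base =>
    obtain rfl : N = mu k₀ := le_antisymm hN.2 hN.1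
    omega
  | succ k hk ih =>
    rcases le_total N (mu k) with hNk | hkN
    · exact ih ⟨hN.1, hNk⟩
    have hblock := hf k hk N ⟨hkN, hN.2⟩
    calc f N ≤ f (mu k₀) + a * N + 2 * b * P k := by linarith [hend k hk]
      _ ≤ f (mu k₀) + a * N + 2 * b * (c * N) := by
        gcongr; exact (hPmu k hk).trans (Nat.mul_le_mul_left c hkN)
      _ = f (mu k₀) + a * N + 2 * b * c * N := by ring

end Blocks

section KorobovNumber

variable {p q : ℕ} {lam mu : ℕ → ℕ}

lemma exists_forall_pow_mul_card_filter_digitBlock_le (hp : 2 ≤ p) (hq : 2 ≤ q)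
    (hpq : p.Coprime q) (hlam : StrictMono lam) (hmu : Monotone mu) :
    ∃ K, ∀ M w k N, q ^ M ≤ p ^ lam k → N ≤ mu (k + 1) →
      q ^ M * #{n ∈ Ico (mu k) N | digitBlock q (∑' i, korobovTerm p q lam mu i) M n = w} ≤
        3 * (K * (N - mu k) + p ^ lam k) := by
  obtain ⟨K, hK⟩ := exists_forall_pow_le_mul_sub hq hpq
  refine ⟨K, fun M w k N hMk hN => ?_⟩
  set α := ∑' i, korobovTerm p q lam mu i
  obtain ⟨A, hA, hfloor⟩ := exists_coprime_forall_natFloor_eq hp hq hlam hmu k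
  have hα : 0 ≤ α := tsum_nonneg korobovTerm_nonneg
  have hblock (n : ℕ) : digitBlock q α M n = ⌊(q ^ M : ℕ) * (α * (q : ℝ) ^ n)⌋₊ % q ^ M := by
    rw [digitBlock, Nat.cast_pow, pow_add, ← mul_assoc, mul_comm ((q : ℝ) ^ M)]
  simp only [hblock]
  refine mul_card_filter_natFloor_mul_mod_le (fun n => by positivity) (by positivity) hMk ?_ w
  intro a ha b hb hab hmod
  have hsub := Ico_subset_Ico_right (a := mu k) hN
  rw [hfloor a (hsub ha), hfloor b (hsub hb)] at hmod
  have hka := (mem_Ico.1 ha).1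
  have := hK A (lam k) (a - mu k) (b - mu k) hA (Nat.sub_lt_sub_right hka hab) hmod
  rwa [Nat.sub_sub_sub_cancel_right hka] at this

lemma exists_blockFrequenciesBounded_tsum_korobovTerm (hp : 2 ≤ p) (hq : 2 ≤ q)
    (hpq : p.Coprime q) (hlam : StrictMono lam) (hmu : Monotone mu) {c : ℕ}
    (hc : ∀ᶠ k in atTop, p ^ lam k ≤ c * mu k) :
    ∃ C, BlockFrequenciesBounded q (∑' k, korobovTerm p q lam mu k) C := by
  obtain ⟨K, hK⟩ := exists_forall_pow_mul_card_filter_digitBlock_le hp hq hpq hlam hmu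
  refine ⟨1 + 3 * K + 6 * c, fun M => ?_⟩
  set α := ∑' k, korobovTerm p q lam mu k
  have hlt_pow (k : ℕ) : k < p ^ lam k := hlam.le_apply.trans_lt (Nat.lt_pow_self hp)
  obtain ⟨k₀, hk₀⟩ := eventually_atTop.1 (hc.and (eventually_ge_atTop (q ^ M)))
  filter_upwards [eventually_ge_atTop (mu k₀), eventually_ge_atTop (q ^ M * mu k₀)]
    with N hN hMN w _
  obtain ⟨k, hk, hNk⟩ : ∃ k ≥ k₀, N ≤ mu k := by
    refine ⟨max k₀ (c * N), le_max_left .., ?_⟩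
    by_contra! h
    have hpow := (hk₀ _ (le_max_left k₀ (c * N))).1
    have := (le_max_right k₀ (c * N)).trans_lt (hlt_pow _)
    exact (this.trans_le (hpow.trans (Nat.mul_le_mul_left c h.le))).false
  have hadd (j : ℕ) (hj : k₀ ≤ j) (n : ℕ) (hn : n ∈ Set.Icc (mu j) (mu (j + 1))) :
      q ^ M * blockCount q α M w n + 3 * K * mu j ≤
        q ^ M * blockCount q α M w (mu j) + 3 * K * n + 3 * p ^ lam j := by
    have hblock := hK M w j n ((hk₀ j hj).2.trans (hlt_pow j).le) hn.2
    have hcancel : 3 * K * (n - mu j) + 3 * K * mu j = 3 * K * n := by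
      rw [← mul_add, Nat.sub_add_cancel hn.1]
    rw [blockCount_eq_add_card hn.1, mul_add]
    linarith
  have hstart : blockCount q α M w (mu k₀) ≤ mu k₀ :=
    (card_filter_le _ _).trans (card_range _).le
  calc q ^ M * blockCount q α M w N
      ≤ q ^ M * blockCount q α M w (mu k₀) + 3 * K * N + 2 * 3 * c * N :=
        le_add_mul_of_forall_block_le hmu (fun j => two_mul_pow_le_pow hp (hlam j.lt_succ_self))
          (fun j hj => (hk₀ j hj).1) hadd hk ⟨hN, hNk⟩
    _ ≤ N + 3 * K * N + 2 * 3 * c * N := by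
        gcongr; exact (Nat.mul_le_mul_left _ hstart).trans hMN
    _ = (1 + 3 * K + 6 * c) * N := by ring

end KorobovNumber

theorem korobov_normal_general {p q : ℕ} (hp : 2 ≤ p) (hq : 2 ≤ q) (hpq : p.Coprime q)
    {lam mu : ℕ → ℕ} (hlam : StrictMono lam) (hmu : Monotone mu)
    (hO : (fun k => (p : ℝ) ^ lam k) =O[atTop] fun k => (mu k : ℝ)) :
    IsNormal q (∑' k : ℕ, ((p : ℝ) ^ lam k)⁻¹ * ((q : ℝ) ^ mu k)⁻¹) := by
  obtain ⟨B, hB⟩ := hO.bound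
  have hc : ∀ᶠ k in atTop, p ^ lam k ≤ ⌈B⌉₊ * mu k := hB.mono fun k hk => by
    rw [norm_pow, RCLike.norm_natCast, RCLike.norm_natCast] at hk
    have : (p : ℝ) ^ lam k ≤ ⌈B⌉₊ * mu k := hk.trans (by gcongr; exact Nat.le_ceil B)
    exact_mod_cast this
  obtain ⟨C, hC⟩ := exists_blockFrequenciesBounded_tsum_korobovTerm hp hq hpq hlam hmu hc
  exact hC.isNormal (by omega)

/-- **Korobov**: if `p, q ≥ 2` are coprime, `(λ_k)` and `(μ_k)` are strictly increasing
sequences of positive integers with `μ_k ≥ p^{λ_k}`, then `α = ∑_k p^{-λ_k} q^{-μ_k}` is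
normal to base `q`. -/
theorem korobov_normal (p q : ℕ) (hp : 2 ≤ p) (hq : 2 ≤ q) (hcop : Nat.Coprime p q)
    (lam mu : ℕ → ℕ) (hlam : StrictMono lam) (hmu : StrictMono mu)
    (hlam1 : ∀ k, 1 ≤ lam k) (hmu1 : ∀ k, 1 ≤ mu k)
    (hge : ∀ k, p ^ lam k ≤ mu k) :
    IsNormal q (∑' k : ℕ, ((p : ℝ) ^ lam k)⁻¹ * ((q : ℝ) ^ mu k)⁻¹) :=
  korobov_normal_general hp hq hcop hlam hmu.monotone <|
    .of_norm_le fun k => by simpa using mod_cast hge k
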